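/- Let Q ⊆ ℝ^m be a nonempty closed convex set having the uniform second-order tangent path (uSOTP) property at λ̄ ∈ Q, let U be an open neighborhood of x̄ ∈ ℝⁿ, and let F : U → ℝ^m be twice continuously differentiable with F(x̄) = 0. Assume Robinson's constraint qualification 0 ∈ int{DF(x̄)h − y : h ∈ ℝⁿ, y ∈ ℝ^m with σ_Q(y) < +∞} and the strict constraint qualification {DF(x̄)h − v : h ∈ ℝⁿ, v ∈ N_Q(λ̄)} = ℝ^m, and set φ(x) = σ_Q(F(x)) for x ∈ U. Then for every h ∈ ℝⁿ: d²_s φ(x̄ | DF(x̄)ᵀλ̄)(h) = ⟨λ̄, D²F(x̄)[h,h]⟩ if h ∈ aff( DF(x̄)⁻¹(N_Q(λ̄)) ), and d²_s φ(x̄ | DF(x̄)ᵀλ̄)(h) = +∞ otherwise. -/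

import Mathlib

open Filter Topology Set
open scoped InnerProductSpace Pointwise

noncomputable section

/-- Support function of `Q ⊆ ℝ^m`, with values in the extended reals. -/
def supportFn {m : ℕ} (Q : Set (EuclideanSpace ℝ (Fin m))) (x : EuclideanSpace ℝ (Fin m)) :
    EReal :=
  ⨆ z ∈ Q, ((⟪z, x⟫_ℝ : ℝ) : EReal)

/-- The normal cone of a convex set `Q ⊆ ℝ^m` at a point `lam ∈ Q`. -/
def normalCone {m : ℕ} (Q : Set (EuclideanSpace ℝ (Fin m))) (lam : EuclideanSpace ℝ (Fin m)) :
    Set (EuclideanSpace ℝ (Fin m)) :=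
  {v | ∀ y ∈ Q, ⟪v, y - lam⟫_ℝ ≤ 0}

/-- The tangent cone of a convex set `Q` at `lam`: the closure of `⋃_{t>0} t • (Q - lam)`. -/
def tangentConeSet {m : ℕ} (Q : Set (EuclideanSpace ℝ (Fin m))) (lam : EuclideanSpace ℝ (Fin m)) :
    Set (EuclideanSpace ℝ (Fin m)) :=
  closure (⋃ t ∈ Set.Ioi (0 : ℝ), t • ((fun z => z - lam) '' Q))

/-- The lineality space `lin(T_Q(lam)) = T_Q(lam) ∩ (−T_Q(lam))` of the tangent cone. -/
def linTangent {m : ℕ} (Q : Set (EuclideanSpace ℝ (Fin m))) (lam : EuclideanSpace ℝ (Fin m)) :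
    Set (EuclideanSpace ℝ (Fin m)) :=
  tangentConeSet Q lam ∩ (-(tangentConeSet Q lam))

/-- The uniform second-order tangent path (uSOTP) property of `Q` at `lam0`. -/
def uSOTP {m : ℕ} (Q : Set (EuclideanSpace ℝ (Fin m))) (lam0 : EuclideanSpace ℝ (Fin m)) : Prop :=
  ∃ δ > (0 : ℝ), ∃ M > (0 : ℝ), ∃ V ∈ 𝓝 lam0,
    ∃ S : EuclideanSpace ℝ (Fin m) → Submodule ℝ (EuclideanSpace ℝ (Fin m)),
      (∀ lam ∈ Q ∩ V, (S lam : Set (EuclideanSpace ℝ (Fin m))) ⊆ linTangent Q lam) ∧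
      (∀ lamSeq : ℕ → EuclideanSpace ℝ (Fin m), (∀ k, lamSeq k ∈ Q) →
        Tendsto lamSeq atTop (𝓝 lam0) →
        (∀ v ∈ linTangent Q lam0, ∃ vs : ℕ → EuclideanSpace ℝ (Fin m),
          (∀ k, vs k ∈ S (lamSeq k)) ∧ Tendsto vs atTop (𝓝 v)) ∧
        (∀ vs : ℕ → EuclideanSpace ℝ (Fin m), (∀ k, vs k ∈ S (lamSeq k)) →
          ∀ p, MapClusterPt p atTop vs → p ∈ linTangent Q lam0)) ∧
      (∀ lam ∈ Q ∩ V, ∀ v ∈ S lam, ‖v‖ = 1 →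
        ∃ r : ℝ → EuclideanSpace ℝ (Fin m),
          ∀ t ∈ Set.Icc (0 : ℝ) δ, ‖r t‖ ≤ M ∧ lam + t • v + (t ^ 2 / 2) • r t ∈ Q)

/-- Second-order difference quotient `Δ²_t f(x|v)(h)`. -/
def secondDQ {n : ℕ} (f : EuclideanSpace ℝ (Fin n) → EReal)
    (x v : EuclideanSpace ℝ (Fin n)) (t : ℝ) (h : EuclideanSpace ℝ (Fin n)) : EReal :=
  ((2 / t ^ 2 : ℝ) : EReal) * (f (x + t • h) - f x - ((t * ⟪v, h⟫_ℝ : ℝ) : EReal))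

/-- Strict second subderivative of the support function `σ_Q` at `0` for `lam0` in direction `w`. -/
def strictD2supp {m : ℕ} (Q : Set (EuclideanSpace ℝ (Fin m))) (lam0 : EuclideanSpace ℝ (Fin m))
    (w : EuclideanSpace ℝ (Fin m)) : EReal :=
  liminf
    (fun p : ℝ × EuclideanSpace ℝ (Fin m) × EuclideanSpace ℝ (Fin m) × EuclideanSpace ℝ (Fin m) =>
      secondDQ (supportFn Q) p.2.2.1 p.2.2.2 p.1 p.2.1)
    (((𝓝[>] (0 : ℝ)) ×ˢ (𝓝 w ×ˢ (𝓝 (0 : EuclideanSpace ℝ (Fin m)) ×ˢ 𝓝 lam0))) ⊓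
      Filter.principal
        {p : ℝ × EuclideanSpace ℝ (Fin m) × EuclideanSpace ℝ (Fin m) × EuclideanSpace ℝ (Fin m) |
          p.2.2.2 ∈ Q ∧ supportFn Q p.2.2.1 = ((⟪p.2.2.2, p.2.2.1⟫_ℝ : ℝ) : EReal)})

/-- Strict second subderivative of `φ = σ_Q ∘ F` at `xbar` for `vbar` in direction `h`. -/
def strictD2phi {n m : ℕ} (Q : Set (EuclideanSpace ℝ (Fin m)))
    (F : EuclideanSpace ℝ (Fin n) → EuclideanSpace ℝ (Fin m))
    (F' : EuclideanSpace ℝ (Fin n) → (EuclideanSpace ℝ (Fin n) →L[ℝ] EuclideanSpace ℝ (Fin m)))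
    (xbar vbar h : EuclideanSpace ℝ (Fin n)) : EReal :=
  liminf
    (fun p : ℝ × EuclideanSpace ℝ (Fin n) × EuclideanSpace ℝ (Fin n) × EuclideanSpace ℝ (Fin n) =>
      secondDQ (fun x => supportFn Q (F x)) p.2.2.1 p.2.2.2 p.1 p.2.1)
    (((𝓝[>] (0 : ℝ)) ×ˢ (𝓝 h ×ˢ (𝓝 xbar ×ˢ 𝓝 vbar))) ⊓
      Filter.principal
        {p : ℝ × EuclideanSpace ℝ (Fin n) × EuclideanSpace ℝ (Fin n) × EuclideanSpace ℝ (Fin n) |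
          ∃ lam ∈ Q, p.2.2.2 = ContinuousLinearMap.adjoint (F' p.2.2.1) lam ∧
            supportFn Q (F p.2.2.1) = ((⟪lam, F p.2.2.1⟫_ℝ : ℝ) : EReal)})

theorem aux_taylor_bound {E G : Type*} [NormedAddCommGroup E] [NormedSpace ℝ E]
    [NormedAddCommGroup G] [NormedSpace ℝ G]
    (F : E → G) (F' : E → E →L[ℝ] G) (F'' : E → E →L[ℝ] E →L[ℝ] G) (U : Set E) (hU : IsOpen U)
    (xb : E) (hx : xb ∈ U)
    (hF' : ∀ x ∈ U, HasFDerivAt F (F' x) x)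
    (hF'' : ∀ x ∈ U, HasFDerivAt F' (F'' x) x)
    (hc : ContinuousOn F'' U) (ε : ℝ) (hε : 0 < ε) :
    ∃ ρ > 0, ∀ x k : E, x ∈ Metric.ball xb ρ → x + k ∈ Metric.ball xb ρ →
      ‖F (x + k) - F x - F' x k - (1/2 : ℝ) • F'' xb k k‖ ≤ ε * ‖k‖ ^ 2 := by
  have h1 : ∀ᶠ y in 𝓝 xb, y ∈ U ∧ ‖F'' y - F'' xb‖ ≤ ε := by
    refine (hU.eventually_mem hx).and ?_
    have := (hc.continuousAt (hU.mem_nhds hx)).tendsto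
    have h2 : ∀ᶠ y in 𝓝 xb, F'' y ∈ Metric.closedBall (F'' xb) ε :=
      this (Metric.closedBall_mem_nhds (α := E →L[ℝ] E →L[ℝ] G) (F'' xb) hε)
    filter_upwards [h2] with y hy
    exact (dist_eq_norm (F'' y) (F'' xb)).symm.le.trans hy
  obtain ⟨ρ, hρ, hb⟩ := Metric.eventually_nhds_iff_ball.1 h1
  refine ⟨ρ, hρ, fun x k hxb hkb => ?_⟩
  have hseg : ∀ s ∈ Icc (0:ℝ) 1, x + s • k ∈ Metric.ball xb ρ := by
    intro s hs
    have := (convex_ball xb ρ).add_smul_sub_mem hxb hkb hs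
    simpa using this
  have hd : ∀ s ∈ Icc (0:ℝ) 1, ‖F' (x + s • k) - F' x - F'' xb (s • k)‖ ≤ ε * ‖s • k‖ := by
    intro s hs
    have := (convex_ball xb ρ).norm_image_sub_le_of_norm_hasFDerivWithin_le' (𝕜 := ℝ) (φ := F'' xb)
      (f := F') (f' := F'') (C := ε)
      (fun y hy => (hF'' y (hb y hy).1).hasFDerivWithinAt) (fun y hy => (hb y hy).2) hxb (hseg s hs)
    simpa using this
  let g : ℝ → G := fun s => F (x + s • k) - s • F' x k - (s ^ 2 / 2) • F'' xb k k
  have hg : ∀ s ∈ Icc (0:ℝ) 1, HasDerivWithinAt g (F' (x + s • k) k - F' x k - s • F'' xb k k)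
      (Icc 0 1) s := by
    intro s hs
    apply HasDerivAt.hasDerivWithinAt
    have hl : HasDerivAt (fun s : ℝ => x + s • k) k s := by
      simpa using ((hasDerivAt_id s).smul_const k).const_add x
    have e1 := (hF' _ (hb _ (hseg s hs)).1).comp_hasDerivAt s hl
    have e2 : HasDerivAt (fun s : ℝ => s • F' x k) (F' x k) s := by
      simpa using ((hasDerivAt_id s).smul_const (F' x k))
    have e3 : HasDerivAt (fun s : ℝ => (s ^ 2 / 2) • F'' xb k k) (s • F'' xb k k) s := by
      have : HasDerivAt (fun s : ℝ => s ^ 2 / 2) s s := by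
        have := ((hasDerivAt_id s).pow 2).div_const 2
        simpa using this
      exact this.smul_const _
    exact (e1.sub e2).sub e3
  have := norm_image_sub_le_of_norm_deriv_le_segment_01' hg (C := ε * ‖k‖ ^ 2) (by
    intro s hs
    have hs' : s ∈ Icc (0:ℝ) 1 := ⟨hs.1, hs.2.le⟩
    have e : F' (x + s • k) k - F' x k - s • F'' xb k k
        = (F' (x + s • k) - F' x - F'' xb (s • k)) k := by simp
    rw [e]
    have h3 : ‖s • k‖ ≤ ‖k‖ := by
      rw [norm_smul, Real.norm_of_nonneg hs.1]
      exact mul_le_of_le_one_left (norm_nonneg _) hs.2.le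
    calc _ ≤ ‖F' (x + s • k) - F' x - F'' xb (s • k)‖ * ‖k‖ := ContinuousLinearMap.le_opNorm _ _
      _ ≤ (ε * ‖s • k‖) * ‖k‖ := by gcongr; exact hd s hs'
      _ ≤ (ε * ‖k‖) * ‖k‖ := by gcongr
      _ = _ := by ring)
  convert this using 2
  simp only [g]
  simp
  abel

theorem aux_taylor {E G : Type*} [NormedAddCommGroup E] [NormedSpace ℝ E]
    [NormedAddCommGroup G] [NormedSpace ℝ G]
    (F : E → G) (F' : E → E →L[ℝ] G) (F'' : E → E →L[ℝ] E →L[ℝ] G) (U : Set E) (hU : IsOpen U)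
    (xb : E) (hx : xb ∈ U)
    (hF' : ∀ x ∈ U, HasFDerivAt F (F' x) x)
    (hF'' : ∀ x ∈ U, HasFDerivAt F' (F'' x) x)
    (hc : ContinuousOn F'' U) (h : E) :
    Tendsto (fun q : ℝ × E × E => (2 / q.1 ^ 2) • (F (q.2.2 + q.1 • q.2.1) - F q.2.2 -
      q.1 • F' q.2.2 q.2.1)) (𝓝[>] (0:ℝ) ×ˢ (𝓝 h ×ˢ 𝓝 xb)) (𝓝 (F'' xb h h)) := by
  have ht1 : Tendsto (fun q : ℝ × E × E => q.1) (𝓝[>] (0:ℝ) ×ˢ (𝓝 h ×ˢ 𝓝 xb)) (𝓝[>] 0) :=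
    tendsto_fst
  have ht1' := ht1.mono_right nhdsWithin_le_nhds
  have ht2 : Tendsto (fun q : ℝ × E × E => q.2.1) (𝓝[>] (0:ℝ) ×ˢ (𝓝 h ×ˢ 𝓝 xb)) (𝓝 h) :=
    tendsto_fst.comp tendsto_snd
  have ht3 : Tendsto (fun q : ℝ × E × E => q.2.2) (𝓝[>] (0:ℝ) ×ˢ (𝓝 h ×ˢ 𝓝 xb)) (𝓝 xb) :=
    tendsto_snd.comp tendsto_snd
  have ht4 : Tendsto (fun q : ℝ × E × E => q.2.2 + q.1 • q.2.1)
      (𝓝[>] (0:ℝ) ×ˢ (𝓝 h ×ˢ 𝓝 xb)) (𝓝 xb) := by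
    simpa using ht3.add (ht1'.smul ht2)
  have hq : Tendsto (fun q : ℝ × E × E => F'' xb q.2.1 q.2.1)
      (𝓝[>] (0:ℝ) ×ˢ (𝓝 h ×ˢ 𝓝 xb)) (𝓝 (F'' xb h h)) := by
    have : Continuous (fun y : E => F'' xb y y) := by fun_prop
    exact (this.tendsto h).comp ht2
  have hdiff : Tendsto (fun q : ℝ × E × E => (2 / q.1 ^ 2) • (F (q.2.2 + q.1 • q.2.1) - F q.2.2 -
      q.1 • F' q.2.2 q.2.1) - F'' xb q.2.1 q.2.1) (𝓝[>] (0:ℝ) ×ˢ (𝓝 h ×ˢ 𝓝 xb)) (𝓝 0) := by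
    rw [Metric.tendsto_nhds]
    intro e he
    have hD : 0 < 2 * (‖h‖ + 1) ^ 2 := by positivity
    obtain ⟨ρ, hρ, hb⟩ := aux_taylor_bound F F' F'' U hU xb hx hF' hF'' hc
      (e / 2 / (2 * (‖h‖ + 1) ^ 2)) (by positivity)
    filter_upwards [ht3.eventually (Metric.ball_mem_nhds xb hρ),
      ht4.eventually (Metric.ball_mem_nhds xb hρ), ht1.eventually self_mem_nhdsWithin,
      (ht2.norm).eventually (gt_mem_nhds (lt_add_one ‖h‖))] with q h3 h4 h1 h2
    have ht : 0 < q.1 := h1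
    have := hb _ _ h3 h4
    rw [dist_zero_right]
    have e1 : (2 / q.1 ^ 2) • (F (q.2.2 + q.1 • q.2.1) - F q.2.2 -
      q.1 • F' q.2.2 q.2.1) - F'' xb q.2.1 q.2.1 = (2 / q.1 ^ 2) •
        (F (q.2.2 + q.1 • q.2.1) - F q.2.2 - F' q.2.2 (q.1 • q.2.1) -
          (1/2 : ℝ) • F'' xb (q.1 • q.2.1) (q.1 • q.2.1)) := by
      simp only [map_smul, smul_sub, smul_apply, smul_smul]
      congr 1
      have : 2 / q.1 ^ 2 * (1 / 2 * (q.1 * q.1)) = 1 := by field_simp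
      rw [this, one_smul]
    rw [e1, norm_smul, Real.norm_of_nonneg (by positivity)]
    calc _ ≤ 2 / q.1 ^ 2 * ((e / 2 / (2 * (‖h‖ + 1) ^ 2)) * ‖q.1 • q.2.1‖ ^ 2) := by gcongr
      _ = (e / 2 / (2 * (‖h‖ + 1) ^ 2)) * (2 * ‖q.2.1‖ ^ 2) := by
        rw [norm_smul, Real.norm_of_nonneg ht.le]; field_simp
      _ ≤ (e / 2 / (2 * (‖h‖ + 1) ^ 2)) * (2 * (‖h‖ + 1) ^ 2) := by gcongr
      _ = e / 2 := by field_simp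
      _ < e := by linarith
  simpa using hdiff.add hq

theorem aux_metricreg {E G : Type*} [NormedAddCommGroup E] [NormedSpace ℝ E] [CompleteSpace E]
    [NormedAddCommGroup G] [NormedSpace ℝ G] [CompleteSpace G]
    (f : E → G) (f' : E →L[ℝ] G) (a : E) (hf : HasStrictFDerivAt f f' a) (h0 : f a = 0)
    (hs : f'.range = ⊤) :
    ∃ K ≥ (0:ℝ), ∀ᶠ b in 𝓝 a, ∃ z, f z = 0 ∧ ‖z - b‖ ≤ K * ‖f b‖ := by
  let R := f'.nonlinearRightInverseOfSurjective hs
  have hR : 0 < R.nnnorm := f'.nonlinearRightInverseOfSurjective_nnnorm_pos hs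
  have hR' : (0:ℝ) < R.nnnorm := hR
  obtain ⟨s, hsn, hap⟩ := hf.approximates_deriv_on_nhds (c := R.nnnorm⁻¹ / 2)
    (Or.inr (by positivity))
  obtain ⟨ρ, hρ, hb⟩ := Metric.mem_nhds_iff.1 hsn
  refine ⟨2 * R.nnnorm, by positivity, ?_⟩
  have hcont : Tendsto (fun b => 2 * (R.nnnorm : ℝ) * ‖f b‖) (𝓝 a) (𝓝 0) := by
    have := hf.continuousAt.tendsto.norm.const_mul (2 * (R.nnnorm : ℝ))
    simpa [h0] using this
  filter_upwards [Metric.ball_mem_nhds a (half_pos hρ),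
    hcont.eventually (gt_mem_nhds (half_pos hρ))] with b hb1 hb2
  have := hap.surjOn_closedBall_of_nonlinearRightInverse R (ε := 2 * R.nnnorm * ‖f b‖) (b := b)
    (by positivity) (by
      refine Subset.trans ?_ hb
      intro y hy
      rw [Metric.mem_closedBall] at hy
      rw [Metric.mem_ball] at hb1 ⊢
      linarith [dist_triangle y b a])
  have h0m : (0:G) ∈ Metric.closedBall (f b) (((R.nnnorm : ℝ)⁻¹ - ((R.nnnorm⁻¹ / 2 : NNReal) : ℝ)) *
      (2 * R.nnnorm * ‖f b‖)) := by
    rw [Metric.mem_closedBall, dist_zero_left]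
    apply le_of_eq
    push_cast
    field_simp
    ring
  obtain ⟨z, hz1, hz2⟩ := this h0m
  exact ⟨z, hz2, by simpa [dist_eq_norm] using hz1⟩

theorem aux_lam_est {n m : ℕ} (Q : Set (EuclideanSpace ℝ (Fin m)))
    (lb : EuclideanSpace ℝ (Fin m))
    (A : EuclideanSpace ℝ (Fin n) →L[ℝ] EuclideanSpace ℝ (Fin m))
    (hStrict : {z | ∃ h : EuclideanSpace ℝ (Fin n), ∃ v ∈ normalCone Q lb,
        z = A h - v} = Set.univ) :
    ∃ C ≥ (0:ℝ), ∀ lam ∈ Q, ‖lam - lb‖ ≤ C * ‖ContinuousLinearMap.adjoint A (lam - lb)‖ := by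
  have key : ∀ w : EuclideanSpace ℝ (Fin m), ∃ c ≥ (0:ℝ), ∀ lam ∈ Q,
      ⟪w, lam - lb⟫_ℝ ≤ c * ‖ContinuousLinearMap.adjoint A (lam - lb)‖ := by
    intro w
    have hw : -w ∈ {z | ∃ h : EuclideanSpace ℝ (Fin n), ∃ v ∈ normalCone Q lb, z = A h - v} := by
      rw [hStrict]; trivial
    obtain ⟨h, v, hv, e⟩ := hw
    refine ⟨‖h‖, norm_nonneg _, fun lam hl => ?_⟩
    have e' : w = v - A h := by rw [← neg_neg w, e]; abel
    rw [e', inner_sub_left, ← ContinuousLinearMap.adjoint_inner_right]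
    have h1 := hv lam hl
    have h2 := abs_le.1 (abs_real_inner_le_norm h (ContinuousLinearMap.adjoint A (lam - lb)))
    linarith [h2.1]
  let b := EuclideanSpace.basisFun (Fin m) ℝ
  choose c hc0 hc using fun i => key (b i)
  choose d hd0 hd using fun i => key (-(b i))
  refine ⟨∑ i, (c i + d i), Finset.sum_nonneg fun i _ => add_nonneg (hc0 i) (hd0 i), ?_⟩
  intro lam hl
  conv_lhs => rw [← b.sum_repr' (lam - lb)]
  rw [Finset.sum_mul]
  refine (norm_sum_le _ _).trans (Finset.sum_le_sum fun i _ => ?_)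
  rw [norm_smul, b.norm_eq_one, mul_one, Real.norm_eq_abs]
  have h1 := hc i lam hl
  have h2 := hd i lam hl
  rw [inner_neg_left] at h2
  have p1 := mul_nonneg (hc0 i) (norm_nonneg (ContinuousLinearMap.adjoint A (lam - lb)))
  have p2 := mul_nonneg (hd0 i) (norm_nonneg (ContinuousLinearMap.adjoint A (lam - lb)))
  rw [add_mul]
  exact abs_le.2 ⟨by linarith, by linarith⟩

theorem aux_lam_conv {n m : ℕ} (Q : Set (EuclideanSpace ℝ (Fin m)))
    (lb : EuclideanSpace ℝ (Fin m))
    (F' : EuclideanSpace ℝ (Fin n) → (EuclideanSpace ℝ (Fin n) →L[ℝ] EuclideanSpace ℝ (Fin m)))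
    (xb : EuclideanSpace ℝ (Fin n)) (hc : ContinuousAt F' xb)
    (hStrict : {z | ∃ h : EuclideanSpace ℝ (Fin n), ∃ v ∈ normalCone Q lb,
        z = F' xb h - v} = Set.univ) (s : Set (EuclideanSpace ℝ (Fin m))) (hs : s ∈ 𝓝 lb) :
    ∀ᶠ q : EuclideanSpace ℝ (Fin n) × EuclideanSpace ℝ (Fin n) in
      𝓝 xb ×ˢ 𝓝 (ContinuousLinearMap.adjoint (F' xb) lb),
      ∀ lam ∈ Q, q.2 = ContinuousLinearMap.adjoint (F' q.1) lam → lam ∈ s := by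
  obtain ⟨C, hC0, hC⟩ := aux_lam_est Q lb (F' xb) hStrict
  obtain ⟨r, hr, hb⟩ := Metric.mem_nhds_iff.1 hs
  have t1 : Tendsto (fun q : EuclideanSpace ℝ (Fin n) × EuclideanSpace ℝ (Fin n) =>
      ‖F' q.1 - F' xb‖) (𝓝 xb ×ˢ 𝓝 (ContinuousLinearMap.adjoint (F' xb) lb)) (𝓝 0) :=
    (tendsto_iff_norm_sub_tendsto_zero.1 hc.tendsto).comp tendsto_fst
  have t2 : Tendsto (fun q : EuclideanSpace ℝ (Fin n) × EuclideanSpace ℝ (Fin n) =>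
      ‖q.2 - ContinuousLinearMap.adjoint (F' xb) lb‖)
      (𝓝 xb ×ˢ 𝓝 (ContinuousLinearMap.adjoint (F' xb) lb)) (𝓝 0) :=
    (tendsto_iff_norm_sub_tendsto_zero.1 tendsto_id).comp tendsto_snd
  have t3 : Tendsto (fun q : EuclideanSpace ℝ (Fin n) × EuclideanSpace ℝ (Fin n) =>
      C * (‖q.2 - ContinuousLinearMap.adjoint (F' xb) lb‖ + ‖F' q.1 - F' xb‖ * ‖lb‖))
      (𝓝 xb ×ˢ 𝓝 (ContinuousLinearMap.adjoint (F' xb) lb)) (𝓝 0) := by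
    simpa using (t2.add (t1.mul_const ‖lb‖)).const_mul C
  have t4 : Tendsto (fun q : EuclideanSpace ℝ (Fin n) × EuclideanSpace ℝ (Fin n) =>
      C * ‖F' q.1 - F' xb‖)
      (𝓝 xb ×ˢ 𝓝 (ContinuousLinearMap.adjoint (F' xb) lb)) (𝓝 0) := by
    simpa using t1.const_mul C
  filter_upwards [t3.eventually (gt_mem_nhds (half_pos hr)),
    t4.eventually (gt_mem_nhds (show (0:ℝ) < 1/2 by norm_num))] with q h3 h4 lam hl hq
  apply hb
  rw [Metric.mem_ball, dist_eq_norm]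
  have e := hC lam hl
  have e1 : ContinuousLinearMap.adjoint (F' xb) (lam - lb) =
      (q.2 - ContinuousLinearMap.adjoint (F' xb) lb)
        - (ContinuousLinearMap.adjoint (F' q.1 - F' xb)) (lam - lb)
        - (ContinuousLinearMap.adjoint (F' q.1 - F' xb)) lb := by
    rw [hq]; simp only [map_sub, sub_apply]; abel
  have n1 := (ContinuousLinearMap.adjoint (F' q.1 - F' xb)).le_opNorm (lam - lb)
  have n2 := (ContinuousLinearMap.adjoint (F' q.1 - F' xb)).le_opNorm lb
  have n0 : ‖ContinuousLinearMap.adjoint (F' q.1 - F' xb)‖ = ‖F' q.1 - F' xb‖ :=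
    LinearIsometryEquiv.norm_map _ _
  rw [n0] at n1 n2
  have n3 : ‖ContinuousLinearMap.adjoint (F' xb) (lam - lb)‖ ≤
      ‖q.2 - ContinuousLinearMap.adjoint (F' xb) lb‖ + ‖F' q.1 - F' xb‖ * ‖lam - lb‖
        + ‖F' q.1 - F' xb‖ * ‖lb‖ := by
    rw [e1]
    refine (norm_sub_le _ _).trans (add_le_add ((norm_sub_le _ _).trans ?_) n2)
    gcongr
  have n4 := mul_le_mul_of_nonneg_left n3 hC0
  have n5 : C * ‖F' q.1 - F' xb‖ * ‖lam - lb‖ ≤ 1 / 2 * ‖lam - lb‖ := by gcongr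
  nlinarith

theorem aux_nc_zero {m : ℕ} (Q : Set (EuclideanSpace ℝ (Fin m))) (lb : EuclideanSpace ℝ (Fin m)) :
    (0 : EuclideanSpace ℝ (Fin m)) ∈ normalCone Q lb := by
  intro y _; simp

theorem aux_nc_add {m : ℕ} (Q : Set (EuclideanSpace ℝ (Fin m))) (lb : EuclideanSpace ℝ (Fin m))
    {a b : EuclideanSpace ℝ (Fin m)} (ha : a ∈ normalCone Q lb) (hb : b ∈ normalCone Q lb) :
    a + b ∈ normalCone Q lb := by
  intro y hy
  have h1 := ha y hy
  have h2 := hb y hy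
  rw [inner_add_left]; linarith

theorem aux_nc_smul {m : ℕ} (Q : Set (EuclideanSpace ℝ (Fin m))) (lb : EuclideanSpace ℝ (Fin m))
    {a : EuclideanSpace ℝ (Fin m)} {c : ℝ} (hc : 0 ≤ c) (ha : a ∈ normalCone Q lb) :
    c • a ∈ normalCone Q lb := by
  intro y hy
  have h1 := ha y hy
  rw [real_inner_smul_left]; exact mul_nonpos_of_nonneg_of_nonpos hc h1

theorem aux_nc_convex {m : ℕ} (Q : Set (EuclideanSpace ℝ (Fin m)))
    (lb : EuclideanSpace ℝ (Fin m)) : Convex ℝ (normalCone Q lb) := by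
  intro a ha b hb s t hs ht _
  exact aux_nc_add Q lb (aux_nc_smul Q lb hs ha) (aux_nc_smul Q lb ht hb)

theorem aux_affspan {V : Type*} [AddCommGroup V] [Module ℝ V] (s : Set V) (h0 : (0:V) ∈ s) :
    (affineSpan ℝ s : Set V) = Submodule.span ℝ s := by
  have := affineSpan_insert_zero (k := ℝ) (s := s)
  rwa [insert_eq_of_mem h0] at this

/-- A relative interior point of the normal cone in the image of `A`. -/
theorem aux_ri {n m : ℕ} (Q : Set (EuclideanSpace ℝ (Fin m)))
    (lb : EuclideanSpace ℝ (Fin m))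
    (A : EuclideanSpace ℝ (Fin n) →L[ℝ] EuclideanSpace ℝ (Fin m))
    (hStrict : {z | ∃ h : EuclideanSpace ℝ (Fin n), ∃ v ∈ normalCone Q lb,
        z = A h - v} = Set.univ) :
    ∃ h0 : EuclideanSpace ℝ (Fin n), A h0 ∈ Submodule.span ℝ (normalCone Q lb) ∧ ∃ r > (0:ℝ),
      ∀ w ∈ Submodule.span ℝ (normalCone Q lb),
      ‖w - A h0‖ < r → w ∈ normalCone Q lb := by
  have hne := Set.Nonempty.intrinsicInterior (aux_nc_convex Q lb) ⟨0, aux_nc_zero Q lb⟩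
  obtain ⟨n0, hn0⟩ := hne
  rw [mem_intrinsicInterior] at hn0
  obtain ⟨y, hy, rfl⟩ := hn0
  obtain ⟨r, hr, hb⟩ := Metric.mem_nhds_iff.1 (mem_interior_iff_mem_nhds.1 hy)
  have hw : (y : EuclideanSpace ℝ (Fin m)) ∈ {z | ∃ h : EuclideanSpace ℝ (Fin n), ∃ v ∈ normalCone Q lb, z = A h - v} := by
    rw [hStrict]; trivial
  obtain ⟨h, v, hv, e⟩ := hw
  have e' : A h = y + v := by rw [e]; abel
  have hsp := aux_affspan _ (aux_nc_zero Q lb)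
  have hyN : (y : EuclideanSpace ℝ (Fin m)) ∈ normalCone Q lb := by
    have := hb (Metric.mem_ball_self hr); exact this
  refine ⟨h, ?_, r, hr, ?_⟩
  · rw [e']; exact Submodule.subset_span (aux_nc_add Q lb hyN hv)
  intro w hw hwr
  have h1 : w - v ∈ (affineSpan ℝ (normalCone Q lb) : Set (EuclideanSpace ℝ (Fin m))) := by
    rw [hsp]; exact Submodule.sub_mem _ hw (Submodule.subset_span hv)
  have h2 : (⟨w - v, h1⟩ : affineSpan ℝ (normalCone Q lb)) ∈ Metric.ball y r := by
    rw [Metric.mem_ball, Subtype.dist_eq, dist_eq_norm]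
    have e3 : w - v - (y : EuclideanSpace ℝ (Fin m)) = w - A h := by rw [e']; abel
    rw [← e3] at hwr
    exact hwr
  have h3 : w - v ∈ normalCone Q lb := hb h2
  have := aux_nc_add Q lb h3 hv
  simpa using this

theorem aux_aff_iff {n m : ℕ} (Q : Set (EuclideanSpace ℝ (Fin m)))
    (lb : EuclideanSpace ℝ (Fin m))
    (A : EuclideanSpace ℝ (Fin n) →L[ℝ] EuclideanSpace ℝ (Fin m))
    (hStrict : {z | ∃ h : EuclideanSpace ℝ (Fin n), ∃ v ∈ normalCone Q lb,
        z = A h - v} = Set.univ) (h : EuclideanSpace ℝ (Fin n)) :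
    h ∈ (affineSpan ℝ (A ⁻¹' normalCone Q lb) : Set (EuclideanSpace ℝ (Fin n))) ↔
      A h ∈ Submodule.span ℝ (normalCone Q lb) := by
  rw [aux_affspan _ (by simpa using aux_nc_zero Q lb)]
  constructor
  · intro hh
    have : Submodule.span ℝ (A ⁻¹' normalCone Q lb) ≤
        (Submodule.span ℝ (normalCone Q lb)).comap (A : _ →ₗ[ℝ] _) := by
      rw [Submodule.span_le]
      intro x hx
      exact Submodule.subset_span hx
    exact this hh
  · intro hh
    have hw : ∀ y, ∃ h : EuclideanSpace ℝ (Fin n), ∃ v ∈ normalCone Q lb, y = A h - v := by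
      intro y
      have : y ∈ {z | ∃ h : EuclideanSpace ℝ (Fin n), ∃ v ∈ normalCone Q lb, z = A h - v} := by
        rw [hStrict]; trivial
      exact this
    obtain ⟨h0, h0s, r, hr, hN⟩ := aux_ri Q lb A hStrict
    have hc : Tendsto (fun ε : ℝ => ‖ε • A h‖) (𝓝[>] 0) (𝓝 0) := by
      have : Continuous (fun ε : ℝ => ‖ε • A h‖) := by fun_prop
      have := this.tendsto 0
      simp only [zero_smul, norm_zero] at this
      exact this.mono_left nhdsWithin_le_nhds
    obtain ⟨ε, hε, hε0⟩ := ((hc.eventually (gt_mem_nhds hr)).and self_mem_nhdsWithin).exists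
    have hε0 : 0 < ε := hε0
    have m1 : h0 + ε • h ∈ A ⁻¹' normalCone Q lb := by
      apply hN
      · rw [map_add, map_smul]
        exact Submodule.add_mem _ h0s (Submodule.smul_mem _ _ hh)
      · simpa using hε
    have m2 : h0 ∈ A ⁻¹' normalCone Q lb := by
      apply hN _ h0s; simpa using hr
    have : h = ε⁻¹ • ((h0 + ε • h) - h0) := by
      rw [add_sub_cancel_left, smul_smul, inv_mul_cancel₀ hε0.ne', one_smul]
    rw [this]
    exact Submodule.smul_mem _ _ (Submodule.sub_mem _ (Submodule.subset_span m1)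
      (Submodule.subset_span m2))

/-- Curves in `{F ∈ N}`. -/
theorem aux_curve {n m : ℕ} (N : Set (EuclideanSpace ℝ (Fin m)))
    (hNs : ∀ c : ℝ, 0 ≤ c → ∀ a ∈ N, c • a ∈ N)
    (A : EuclideanSpace ℝ (Fin n) →L[ℝ] EuclideanSpace ℝ (Fin m))
    (F : EuclideanSpace ℝ (Fin n) → EuclideanSpace ℝ (Fin m))
    (xb : EuclideanSpace ℝ (Fin n)) (hF0 : F xb = 0) (hF : HasStrictFDerivAt F A xb)
    (hStrict : {z | ∃ h : EuclideanSpace ℝ (Fin n), ∃ v ∈ N, z = A h - v} = Set.univ)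
    (h : EuclideanSpace ℝ (Fin n)) (hs : A h ∈ Submodule.span ℝ N) (r : ℝ) (hr : 0 < r)
    (hN : ∀ w ∈ Submodule.span ℝ N, ‖w - A h‖ < r → w ∈ N) :
    ∃ x : ℝ → EuclideanSpace ℝ (Fin n), (∀ᶠ t in 𝓝[>] (0:ℝ), F (x t) ∈ N) ∧
      Tendsto (fun t => t⁻¹ • (x t - xb)) (𝓝[>] (0:ℝ)) (𝓝 h) := by
  let W := Submodule.span ℝ N
  let f : EuclideanSpace ℝ (Fin n) × W → EuclideanSpace ℝ (Fin m) := fun z => F z.1 - W.subtypeL z.2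
  let f' : (EuclideanSpace ℝ (Fin n) × W) →L[ℝ] EuclideanSpace ℝ (Fin m) :=
    A.comp (ContinuousLinearMap.fst ℝ _ _) - W.subtypeL.comp (ContinuousLinearMap.snd ℝ _ _)
  have hf : HasStrictFDerivAt f f' (xb, 0) := by
    have h1 : HasStrictFDerivAt (fun z : EuclideanSpace ℝ (Fin n) × W => F z.1)
        (A.comp (ContinuousLinearMap.fst ℝ _ _)) (xb, 0) :=
      HasStrictFDerivAt.comp (xb, (0:W)) hF hasStrictFDerivAt_fst
    have h2 := (W.subtypeL.comp (ContinuousLinearMap.snd ℝ (EuclideanSpace ℝ (Fin n)) W)).hasStrictFDerivAt (x := (xb, (0:W)))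
    exact h1.sub h2
  have hsur : f'.range = ⊤ := by
    rw [eq_top_iff]
    intro y _
    have hy : y ∈ {z | ∃ h : EuclideanSpace ℝ (Fin n), ∃ v ∈ N, z = A h - v} := by
      rw [hStrict]; trivial
    obtain ⟨k, v, hv, e⟩ := hy
    exact ⟨(k, ⟨v, Submodule.subset_span hv⟩), by simp [f', e]⟩
  obtain ⟨K, hK, hev⟩ := aux_metricreg f f' (xb, 0) hf (by simp [f, hF0]) hsur
  let b : ℝ → EuclideanSpace ℝ (Fin n) × W := fun t => (xb + t • h, t • ⟨A h, hs⟩)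
  have hbd : HasDerivAt b (h, ⟨A h, hs⟩) 0 := by
    have h1 : HasDerivAt (fun t : ℝ => xb + t • h) h 0 := by
      simpa using ((hasDerivAt_id (0:ℝ)).smul_const h).const_add xb
    have h2 : HasDerivAt (fun t : ℝ => t • (⟨A h, hs⟩ : W)) ⟨A h, hs⟩ 0 := by
      simpa using ((hasDerivAt_id (0:ℝ)).smul_const (⟨A h, hs⟩ : W))
    exact h1.prodMk h2
  have hb0 : b 0 = (xb, 0) := by simp [b]
  have hbt : Tendsto b (𝓝[>] 0) (𝓝 (xb, 0)) := by
    have := hbd.continuousAt.tendsto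
    rw [hb0] at this
    exact this.mono_left nhdsWithin_le_nhds
  have hfb : HasDerivAt (f ∘ b) 0 0 := by
    have h1 : HasFDerivAt f f' (b 0) := by rw [hb0]; exact hf.hasFDerivAt
    have := h1.comp_hasDerivAt 0 hbd
    simpa [f'] using this
  have hfb0 : Tendsto (fun t => t⁻¹ • f (b t)) (𝓝[>] 0) (𝓝 0) := by
    have := hfb.tendsto_slope_zero_right
    simpa [hb0, f, hF0] using this
  have hex : ∃ z : ℝ → EuclideanSpace ℝ (Fin n) × W, ∀ᶠ t in 𝓝[>] (0:ℝ),
      f (z t) = 0 ∧ ‖z t - b t‖ ≤ K * ‖f (b t)‖ := by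
    have := hbt.eventually hev
    exact ⟨fun t => Classical.epsilon fun z => f z = 0 ∧ ‖z - b t‖ ≤ K * ‖f (b t)‖,
      this.mono fun t ht => Classical.epsilon_spec ht⟩
  obtain ⟨z, hz⟩ := hex
  have hzlim : Tendsto (fun t => t⁻¹ • (z t - b t)) (𝓝[>] 0) (𝓝 0) := by
    apply squeeze_zero_norm' (a := fun t => K * ‖t⁻¹ • f (b t)‖)
    · filter_upwards [hz, self_mem_nhdsWithin] with t ht ht0
      have ht0 : 0 < t := ht0
      rw [norm_smul, norm_smul]
      calc _ ≤ ‖t⁻¹‖ * (K * ‖f (b t)‖) := by gcongr; exact ht.2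
        _ = _ := by ring
    · simpa using hfb0.norm.const_mul K
  have hpos : ∀ᶠ t in 𝓝[>] (0:ℝ), 0 < t := self_mem_nhdsWithin
  refine ⟨fun t => (z t).1, ?_, ?_⟩
  · have h2 : Tendsto (fun t => t⁻¹ • ((z t).2 - t • (⟨A h, hs⟩ : W))) (𝓝[>] 0) (𝓝 0) :=
      (continuous_snd.tendsto (0 : EuclideanSpace ℝ (Fin n) × W)).comp hzlim
    have h3 := h2.norm
    rw [norm_zero] at h3
    filter_upwards [hz, h3.eventually (gt_mem_nhds hr), hpos] with t ht h4 h5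
    have e1 : F (z t).1 = (z t).2 := by
      have := ht.1; simp only [f] at this; exact sub_eq_zero.1 this
    have e2 : F (z t).1 = t • (t⁻¹ • ((z t).2 : EuclideanSpace ℝ (Fin m))) := by
      rw [e1, smul_smul, mul_inv_cancel₀ h5.ne', one_smul]
    rw [e2]
    refine hNs t h5.le _ (hN _ (Submodule.smul_mem _ _ (z t).2.2) ?_)
    have e3 : ((t⁻¹ • ((z t).2 - t • (⟨A h, hs⟩ : W)) : W) : EuclideanSpace ℝ (Fin m)) =
        t⁻¹ • ((z t).2 : EuclideanSpace ℝ (Fin m)) - A h := by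
      simp [smul_sub, smul_smul, inv_mul_cancel₀ h5.ne']
    rw [← e3]
    exact h4
  · have h2 : Tendsto (fun t => t⁻¹ • ((z t).1 - (xb + t • h))) (𝓝[>] 0) (𝓝 0) :=
      (continuous_fst.tendsto (0 : EuclideanSpace ℝ (Fin n) × W)).comp hzlim
    have h3 := h2.add_const h
    rw [zero_add] at h3
    refine h3.congr' ?_
    filter_upwards [hpos] with t ht
    rw [← sub_sub, smul_sub _ _ (t • h), smul_smul, inv_mul_cancel₀ ht.ne', one_smul]
    abel

theorem aux_supp_ge {m : ℕ} (Q : Set (EuclideanSpace ℝ (Fin m))) {mu : EuclideanSpace ℝ (Fin m)}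
    (hmu : mu ∈ Q) (y : EuclideanSpace ℝ (Fin m)) :
    ((⟪mu, y⟫_ℝ : ℝ) : EReal) ≤ supportFn Q y :=
  le_iSup₂ (f := fun z (_ : z ∈ Q) => ((⟪z, y⟫_ℝ : ℝ) : EReal)) mu hmu

theorem aux_supp_eq {m : ℕ} (Q : Set (EuclideanSpace ℝ (Fin m))) {mu : EuclideanSpace ℝ (Fin m)}
    (hmu : mu ∈ Q) {y : EuclideanSpace ℝ (Fin m)} (hy : y ∈ normalCone Q mu) :
    supportFn Q y = ((⟪mu, y⟫_ℝ : ℝ) : EReal) := by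
  apply le_antisymm _ (aux_supp_ge Q hmu y)
  refine iSup₂_le fun z hz => ?_
  have := hy z hz
  rw [inner_sub_right, real_inner_comm z y, real_inner_comm mu y] at this
  exact EReal.coe_le_coe_iff.2 (by linarith)

theorem aux_supp_nc {m : ℕ} (Q : Set (EuclideanSpace ℝ (Fin m))) {mu : EuclideanSpace ℝ (Fin m)}
    {y : EuclideanSpace ℝ (Fin m)} (h : supportFn Q y = ((⟪mu, y⟫_ℝ : ℝ) : EReal)) :
    y ∈ normalCone Q mu := by
  intro z hz
  have := aux_supp_ge Q hz y
  rw [h, EReal.coe_le_coe_iff] at this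
  rw [inner_sub_right, real_inner_comm z y, real_inner_comm mu y]
  linarith

theorem aux_dq_ge {n m : ℕ} (Q : Set (EuclideanSpace ℝ (Fin m)))
    (F : EuclideanSpace ℝ (Fin n) → EuclideanSpace ℝ (Fin m))
    {mu : EuclideanSpace ℝ (Fin m)} (hmu : mu ∈ Q) (x v h : EuclideanSpace ℝ (Fin n)) (t a : ℝ)
    (ha : supportFn Q (F x) = (a : EReal)) :
    ((2 / t ^ 2 * (⟪mu, F (x + t • h)⟫_ℝ - a - t * ⟪v, h⟫_ℝ) : ℝ) : EReal) ≤
      secondDQ (fun x => supportFn Q (F x)) x v t h := by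
  unfold secondDQ
  beta_reduce
  rw [ha, EReal.coe_mul, EReal.coe_sub, EReal.coe_sub]
  have h1 := aux_supp_ge Q hmu (F (x + t • h))
  refine mul_le_mul_of_nonneg_left ?_ (by exact_mod_cast (by positivity))
  exact EReal.sub_le_sub (EReal.sub_le_sub h1 le_rfl) le_rfl

theorem aux_tangent_normal {m : ℕ} (Q : Set (EuclideanSpace ℝ (Fin m)))
    {lam v y : EuclideanSpace ℝ (Fin m)} (hv : v ∈ normalCone Q lam)
    (hy : y ∈ tangentConeSet Q lam) : ⟪v, y⟫_ℝ ≤ 0 := by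
  have hcl : IsClosed {y : EuclideanSpace ℝ (Fin m) | ⟪v, y⟫_ℝ ≤ 0} :=
    isClosed_le (by fun_prop) continuous_const
  have : tangentConeSet Q lam ⊆ {y : EuclideanSpace ℝ (Fin m) | ⟪v, y⟫_ℝ ≤ 0} := by
    apply closure_minimal _ hcl
    intro y hy
    simp only [mem_iUnion, mem_smul_set, mem_image] at hy
    obtain ⟨t, ht, _, ⟨z, hz, rfl⟩, rfl⟩ := hy
    have ht : 0 < t := ht
    have := hv z hz
    simp only [mem_ofPred_eq, real_inner_smul_right]
    exact mul_nonpos_of_nonneg_of_nonpos ht.le this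
  exact this hy

theorem aux_bipolar {m : ℕ} (Q : Set (EuclideanSpace ℝ (Fin m))) (hQ : Convex ℝ Q)
    {lam : EuclideanSpace ℝ (Fin m)} (hl : lam ∈ Q) (v : EuclideanSpace ℝ (Fin m))
    (hv : ∀ w ∈ normalCone Q lam, ⟪w, v⟫_ℝ ≤ 0) : v ∈ tangentConeSet Q lam := by
  by_contra hnot
  have hconv : Convex ℝ (tangentConeSet Q lam) := by
    apply Convex.closure
    intro a ha b hb s t hs ht hst
    simp only [mem_iUnion, mem_smul_set, mem_image] at ha hb ⊢
    obtain ⟨p, hp, _, ⟨z, hz, rfl⟩, rfl⟩ := ha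
    obtain ⟨q, hq, _, ⟨w, hw, rfl⟩, rfl⟩ := hb
    have hp : 0 < p := hp
    have hq : 0 < q := hq
    have hpos : 0 < s * p + t * q := by
      rcases hs.eq_or_lt with rfl | hs'
      · have : t = 1 := by linarith
        subst this; simpa using hq
      · have := mul_pos hs' hp
        have := mul_nonneg ht hq.le
        linarith
    have hz' := hQ hz hw (a := s * p / (s * p + t * q)) (b := t * q / (s * p + t * q))
      (by positivity) (by positivity) (by field_simp)
    refine ⟨s * p + t * q, hpos, _, ⟨_, hz', rfl⟩, ?_⟩
    simp only [smul_sub, smul_add, smul_smul]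
    rw [mul_div_cancel₀ _ hpos.ne', mul_div_cancel₀ _ hpos.ne', add_smul]
    abel
  obtain ⟨f, u, hfu, hux⟩ := geometric_hahn_banach_closed_point hconv isClosed_closure hnot
  have hmem : ∀ z ∈ Q, ∀ t : ℝ, 0 < t → t • (z - lam) ∈ tangentConeSet Q lam := by
    intro z hz t ht
    apply subset_closure
    simp only [mem_iUnion]
    exact ⟨t, ht, smul_mem_smul_set ⟨z, hz, rfl⟩⟩
  have hu : 0 < u := by
    have := hfu _ (hmem lam hl 1 one_pos)
    simpa using this
  let w := (InnerProductSpace.toDual ℝ (EuclideanSpace ℝ (Fin m))).symm f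
  have hw : ∀ y, ⟪w, y⟫_ℝ = f y := fun y => InnerProductSpace.toDual_symm_apply
  have hwN : w ∈ normalCone Q lam := by
    intro y hy
    rw [hw]
    by_contra hpos
    push Not at hpos
    have := hfu _ (hmem y hy (u / f (y - lam)) (by positivity))
    rw [map_smul, smul_eq_mul, div_mul_cancel₀ _ hpos.ne'] at this
    exact lt_irrefl _ this
  have := hv w hwN
  rw [hw] at this
  linarith

theorem aux_lin_exists {m : ℕ} (Q : Set (EuclideanSpace ℝ (Fin m))) (hQ : Convex ℝ Q)
    {lam : EuclideanSpace ℝ (Fin m)} (hl : lam ∈ Q) (w : EuclideanSpace ℝ (Fin m))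
    (hw : w ∉ Submodule.span ℝ (normalCone Q lam)) :
    ∃ v ∈ linTangent Q lam, 0 < ⟪v, w⟫_ℝ := by
  let W := Submodule.span ℝ (normalCone Q lam)
  let v := w - W.starProjection w
  have hvW : ∀ y ∈ W, ⟪y, v⟫_ℝ = 0 := by
    intro y hy
    exact (Submodule.mem_orthogonal W v).1 (W.sub_starProjection_mem_orthogonal w) y hy
  have hv0 : v ≠ 0 := by
    intro h0
    apply hw
    have : w = W.starProjection w := sub_eq_zero.1 h0
    rw [this]
    exact W.starProjection_apply_mem w
  refine ⟨v, ⟨aux_bipolar Q hQ hl v fun y hy => (hvW y (Submodule.subset_span hy)).le, ?_⟩, ?_⟩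
  · rw [Set.mem_neg]
    refine aux_bipolar Q hQ hl _ fun y hy => ?_
    rw [inner_neg_right, hvW y (Submodule.subset_span hy), neg_zero]
  · have e : w = v + W.starProjection w := by simp [v]
    have : ⟪v, w⟫_ℝ = ⟪v, v⟫_ℝ := by
      conv_lhs => rw [e, inner_add_right, ← real_inner_comm v (W.starProjection w)]
      rw [hvW _ (W.starProjection_apply_mem w), add_zero]
    rw [this]
    exact real_inner_self_pos.2 hv0

theorem aux_unit {m : ℕ} (Q : Set (EuclideanSpace ℝ (Fin m))) (lam0 : EuclideanSpace ℝ (Fin m))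
    (S : EuclideanSpace ℝ (Fin m) → Submodule ℝ (EuclideanSpace ℝ (Fin m)))
    (hS : ∀ lamSeq : ℕ → EuclideanSpace ℝ (Fin m), (∀ k, lamSeq k ∈ Q) →
        Tendsto lamSeq atTop (𝓝 lam0) →
        (∀ v ∈ linTangent Q lam0, ∃ vs : ℕ → EuclideanSpace ℝ (Fin m),
          (∀ k, vs k ∈ S (lamSeq k)) ∧ Tendsto vs atTop (𝓝 v)))
    (v w : EuclideanSpace ℝ (Fin m)) (hv : v ∈ linTangent Q lam0) (hvw : 0 < ⟪v, w⟫_ℝ) :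
    ∃ c > (0:ℝ), ∀ᶠ lam in 𝓝 lam0, lam ∈ Q → ∃ u ∈ S lam, ‖u‖ = 1 ∧ c < ⟪u, w⟫_ℝ := by
  have hv0 : v ≠ 0 := by rintro rfl; simp at hvw
  have hvn : 0 < ‖v‖ := norm_pos_iff.2 hv0
  refine ⟨⟪v, w⟫_ℝ / ‖v‖ / 2, by positivity, ?_⟩
  by_contra hcon
  rw [Filter.not_eventually] at hcon
  obtain ⟨ns, hns, hp⟩ := exists_seq_forall_of_frequently hcon
  simp only [Classical.not_imp] at hp
  obtain ⟨vs, hvs, hlim⟩ := hS ns (fun k => (hp k).1) hns v hv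
  have hl2 : Tendsto (fun k => ⟪vs k, w⟫_ℝ / ‖vs k‖) atTop (𝓝 (⟪v, w⟫_ℝ / ‖v‖)) :=
    (hlim.inner tendsto_const_nhds).div hlim.norm hvn.ne'
  obtain ⟨k, h1, h2⟩ := ((hl2.eventually (lt_mem_nhds (half_lt_self (by positivity)))).and
    (hlim.norm.eventually (lt_mem_nhds hvn))).exists
  apply (hp k).2
  refine ⟨‖vs k‖⁻¹ • vs k, Submodule.smul_mem _ _ (hvs k), ?_, ?_⟩
  · rw [norm_smul, norm_inv, norm_norm, inv_mul_cancel₀ h2.ne']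
  · rw [real_inner_smul_left, inv_mul_eq_div]; exact h1

theorem aux_taylor_comp {n m : ℕ} {ι : Type*} (l : Filter ι)
    (U : Set (EuclideanSpace ℝ (Fin n))) (hU : IsOpen U)
    (xb : EuclideanSpace ℝ (Fin n)) (hxb : xb ∈ U)
    (F : EuclideanSpace ℝ (Fin n) → EuclideanSpace ℝ (Fin m))
    (F' : EuclideanSpace ℝ (Fin n) → (EuclideanSpace ℝ (Fin n) →L[ℝ] EuclideanSpace ℝ (Fin m)))
    (F'' : EuclideanSpace ℝ (Fin n) →
      (EuclideanSpace ℝ (Fin n) →L[ℝ] EuclideanSpace ℝ (Fin n) →L[ℝ] EuclideanSpace ℝ (Fin m)))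
    (hF' : ∀ x ∈ U, HasFDerivAt F (F' x) x)
    (hF'' : ∀ x ∈ U, HasFDerivAt F' (F'' x) x)
    (hF''cont : ContinuousOn F'' U) (h : EuclideanSpace ℝ (Fin n))
    (t : ι → ℝ) (k x : ι → EuclideanSpace ℝ (Fin n)) (ht : Tendsto t l (𝓝[>] 0))
    (hk : Tendsto k l (𝓝 h)) (hx : Tendsto x l (𝓝 xb)) :
    Tendsto (fun a => (2 / t a ^ 2) • (F (x a + t a • k a) - F (x a) -
      t a • F' (x a) (k a))) l (𝓝 (F'' xb h h)) := by
  have hT := aux_taylor F F' F'' U hU xb hxb hF' hF'' hF''cont h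
  have h1 : Tendsto (fun a => (t a, k a, x a)) l (𝓝[>] (0:ℝ) ×ˢ (𝓝 h ×ˢ 𝓝 xb)) :=
    ht.prodMk (hk.prodMk hx)
  have h2 := hT.comp h1
  exact h2

theorem aux_adj_tendsto {n m : ℕ} {ι : Type*} (l : Filter ι)
    (G : ι → (EuclideanSpace ℝ (Fin n) →L[ℝ] EuclideanSpace ℝ (Fin m)))
    (A : EuclideanSpace ℝ (Fin n) →L[ℝ] EuclideanSpace ℝ (Fin m))
    (lb : EuclideanSpace ℝ (Fin m)) (h1 : Tendsto G l (𝓝 A)) :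
    Tendsto (fun t => ContinuousLinearMap.adjoint (G t) lb) l
      (𝓝 (ContinuousLinearMap.adjoint A lb)) := by
  have h2 := ((ContinuousLinearMap.adjoint (𝕜 := ℝ) (E := EuclideanSpace ℝ (Fin n))
          (F := EuclideanSpace ℝ (Fin m))).continuous.tendsto A).comp h1
  exact ((ContinuousLinearMap.apply ℝ (EuclideanSpace ℝ (Fin n)) lb).continuous.tendsto
          (ContinuousLinearMap.adjoint A)).comp h2

theorem aux_clm_tendsto {n m : ℕ} {ι : Type*} (l : Filter ι)
    (G : ι → (EuclideanSpace ℝ (Fin n) →L[ℝ] EuclideanSpace ℝ (Fin m)))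
    (A : EuclideanSpace ℝ (Fin n) →L[ℝ] EuclideanSpace ℝ (Fin m))
    (k : ι → EuclideanSpace ℝ (Fin n)) (h : EuclideanSpace ℝ (Fin n))
    (h1 : Tendsto G l (𝓝 A)) (h2 : Tendsto k l (𝓝 h)) :
    Tendsto (fun a => ‖G a (k a) - A h‖) l (𝓝 0) := by
  have hc : Continuous (fun q : (EuclideanSpace ℝ (Fin n) →L[ℝ] EuclideanSpace ℝ (Fin m)) ×
      EuclideanSpace ℝ (Fin n) => q.1 q.2) := isBoundedBilinearMap_apply.continuous
  have h3 := (hc.tendsto (A, h)).comp (h1.prodMk_nhds h2)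
  exact tendsto_iff_norm_sub_tendsto_zero.1 h3

theorem aux_D {n m : ℕ} (F : EuclideanSpace ℝ (Fin n) → EuclideanSpace ℝ (Fin m))
    (A : EuclideanSpace ℝ (Fin n) →L[ℝ] EuclideanSpace ℝ (Fin m))
    (x h : EuclideanSpace ℝ (Fin n)) (t : ℝ) (lam : EuclideanSpace ℝ (Fin m)) :
    2 / t ^ 2 * (⟪lam, F (x + t • h)⟫_ℝ - ⟪lam, F x⟫_ℝ -
      t * ⟪ContinuousLinearMap.adjoint A lam, h⟫_ℝ) =
    ⟪lam, (2 / t ^ 2) • (F (x + t • h) - F x - t • A h)⟫_ℝ := by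
  rw [ContinuousLinearMap.adjoint_inner_left, real_inner_smul_right, inner_sub_right,
    inner_sub_right, real_inner_smul_right]

theorem aux_lower {n m : ℕ} (Q : Set (EuclideanSpace ℝ (Fin m)))
    (lb : EuclideanSpace ℝ (Fin m))
    (U : Set (EuclideanSpace ℝ (Fin n))) (hU : IsOpen U)
    (xb : EuclideanSpace ℝ (Fin n)) (hxb : xb ∈ U)
    (F : EuclideanSpace ℝ (Fin n) → EuclideanSpace ℝ (Fin m))
    (F' : EuclideanSpace ℝ (Fin n) → (EuclideanSpace ℝ (Fin n) →L[ℝ] EuclideanSpace ℝ (Fin m)))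
    (F'' : EuclideanSpace ℝ (Fin n) →
      (EuclideanSpace ℝ (Fin n) →L[ℝ] EuclideanSpace ℝ (Fin n) →L[ℝ] EuclideanSpace ℝ (Fin m)))
    (hF' : ∀ x ∈ U, HasFDerivAt F (F' x) x)
    (hF'' : ∀ x ∈ U, HasFDerivAt F' (F'' x) x)
    (hF''cont : ContinuousOn F'' U)
    (hStrict : {z | ∃ h : EuclideanSpace ℝ (Fin n), ∃ v ∈ normalCone Q lb,
        z = F' xb h - v} = Set.univ) (h : EuclideanSpace ℝ (Fin n)) (c : ℝ)
    (hc : c < ⟪lb, F'' xb h h⟫_ℝ) :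
    ∀ᶠ p : ℝ × EuclideanSpace ℝ (Fin n) × EuclideanSpace ℝ (Fin n) × EuclideanSpace ℝ (Fin n) in
      (𝓝[>] (0 : ℝ)) ×ˢ (𝓝 h ×ˢ (𝓝 xb ×ˢ 𝓝 (ContinuousLinearMap.adjoint (F' xb) lb))),
      ∀ lam ∈ Q, p.2.2.2 = ContinuousLinearMap.adjoint (F' p.2.2.1) lam →
        c < ⟪lam, (2 / p.1 ^ 2) • (F (p.2.2.1 + p.1 • p.2.1) - F p.2.2.1 -
          p.1 • F' p.2.2.1 p.2.1)⟫_ℝ := by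
  have hT := aux_taylor F F' F'' U hU xb hxb hF' hF'' hF''cont h
  have hproj : Tendsto (fun p : ℝ × EuclideanSpace ℝ (Fin n) × EuclideanSpace ℝ (Fin n) ×
      EuclideanSpace ℝ (Fin n) => (p.1, p.2.1, p.2.2.1))
      ((𝓝[>] (0 : ℝ)) ×ˢ (𝓝 h ×ˢ (𝓝 xb ×ˢ 𝓝 (ContinuousLinearMap.adjoint (F' xb) lb))))
      (𝓝[>] (0:ℝ) ×ˢ (𝓝 h ×ˢ 𝓝 xb)) :=
    tendsto_id.prodMap (tendsto_id.prodMap tendsto_fst)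
  have hT' := hT.comp hproj
  have hcont : ContinuousAt (fun q : EuclideanSpace ℝ (Fin m) × EuclideanSpace ℝ (Fin m) =>
    ⟪q.1, q.2⟫_ℝ) (lb, F'' xb h h) := by fun_prop
  have hev := hcont.tendsto.eventually (lt_mem_nhds hc)
  rw [nhds_prod_eq, eventually_prod_iff] at hev
  obtain ⟨pa, ha, pb, hb, hab⟩ := hev
  have hlc := aux_lam_conv Q lb F' xb (hF'' xb hxb).continuousAt hStrict {l | pa l} ha
  have hlc' := (tendsto_snd.comp tendsto_snd : Tendsto (fun p : ℝ × EuclideanSpace ℝ (Fin n) ×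
      EuclideanSpace ℝ (Fin n) × EuclideanSpace ℝ (Fin n) => p.2.2)
      ((𝓝[>] (0 : ℝ)) ×ˢ (𝓝 h ×ˢ (𝓝 xb ×ˢ 𝓝 (ContinuousLinearMap.adjoint (F' xb) lb)))) _).eventually hlc
  filter_upwards [hT'.eventually hb, hlc'] with p h1 h2 lam hl he
  exact hab (h2 lam hl he) h1

/-- The estimate behind the infinite value. -/
theorem aux_top_alg {m : ℕ} (u r y0 y1 D B w : EuclideanSpace ℝ (Fin m)) (t C c0 M : ℝ)
    (ht : 0 < t) (hC : 0 < C) (hu : ‖u‖ = 1) (hr : ‖r‖ ≤ M)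
    (hy : y1 = y0 + t • B + (t ^ 2 / 2) • D) (h0 : 0 ≤ ⟪u, y0⟫_ℝ)
    (hc : c0 < ⟪u, w⟫_ℝ) (hB : ‖B - w‖ < c0 / 2) (h2 : C * t * ‖D‖ < 1)
    (h3 : C ^ 2 * M * ‖y1‖ < 1) :
    C * c0 - 2 ≤ 2 / t ^ 2 * ⟪(C * t) • u + ((C * t) ^ 2 / 2) • r, y1⟫_ℝ := by
  have e1 : 2 / t ^ 2 * ⟪(C * t) • u + ((C * t) ^ 2 / 2) • r, y1⟫_ℝ =
      2 * C / t * ⟪u, y1⟫_ℝ + C ^ 2 * ⟪r, y1⟫_ℝ := by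
    rw [inner_add_left, real_inner_smul_left, real_inner_smul_left]
    field_simp
  have e2 : ⟪u, y1⟫_ℝ = ⟪u, y0⟫_ℝ + t * ⟪u, B⟫_ℝ + t ^ 2 / 2 * ⟪u, D⟫_ℝ := by
    rw [hy, inner_add_right, inner_add_right, real_inner_smul_right, real_inner_smul_right]
  have e3 : 2 * C / t * ⟪u, y1⟫_ℝ = 2 * C / t * ⟪u, y0⟫_ℝ + 2 * C * ⟪u, B⟫_ℝ
      + C * t * ⟪u, D⟫_ℝ := by
    rw [e2]; field_simp
  have p0 : 0 ≤ 2 * C / t * ⟪u, y0⟫_ℝ := by positivity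
  have p1 : -‖B - w‖ ≤ ⟪u, B - w⟫_ℝ := by
    have := (abs_le.1 (abs_real_inner_le_norm u (B - w))).1
    rwa [hu, one_mul] at this
  rw [inner_sub_right] at p1
  have p2 : -‖D‖ ≤ ⟪u, D⟫_ℝ := by
    have := (abs_le.1 (abs_real_inner_le_norm u D)).1
    rwa [hu, one_mul] at this
  have p3 : -(M * ‖y1‖) ≤ ⟪r, y1⟫_ℝ := by
    have := (abs_le.1 (abs_real_inner_le_norm r y1)).1
    have := mul_le_mul_of_nonneg_right hr (norm_nonneg y1)
    linarith
  have q1 : c0 / 2 ≤ ⟪u, B⟫_ℝ := by linarith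
  have q1' : C * c0 ≤ 2 * C * ⟪u, B⟫_ℝ := by nlinarith
  have q2 := mul_le_mul_of_nonneg_left p2 (mul_pos hC ht).le
  have q3 := mul_le_mul_of_nonneg_left p3 (sq_nonneg C)
  rw [e1, e3]
  nlinarith

set_option maxHeartbeats 400000 in
theorem stmt19 {n m : ℕ} (Q : Set (EuclideanSpace ℝ (Fin m)))
    (hQne : Q.Nonempty) (hQc : IsClosed Q) (hQconv : Convex ℝ Q)
    (lambar : EuclideanSpace ℝ (Fin m)) (hlambar : lambar ∈ Q)
    (husotp : uSOTP Q lambar)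
    (U : Set (EuclideanSpace ℝ (Fin n))) (hU : IsOpen U)
    (xbar : EuclideanSpace ℝ (Fin n)) (hxbar : xbar ∈ U)
    (F : EuclideanSpace ℝ (Fin n) → EuclideanSpace ℝ (Fin m))
    (F' : EuclideanSpace ℝ (Fin n) → (EuclideanSpace ℝ (Fin n) →L[ℝ] EuclideanSpace ℝ (Fin m)))
    (F'' : EuclideanSpace ℝ (Fin n) →
      (EuclideanSpace ℝ (Fin n) →L[ℝ] EuclideanSpace ℝ (Fin n) →L[ℝ] EuclideanSpace ℝ (Fin m)))
    (hF' : ∀ x ∈ U, HasFDerivAt F (F' x) x)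
    (hF'' : ∀ x ∈ U, HasFDerivAt F' (F'' x) x)
    (hF''cont : ContinuousOn F'' U)
    (hF0 : F xbar = 0)
    (hRob : (0 : EuclideanSpace ℝ (Fin m)) ∈
      interior {z | ∃ h : EuclideanSpace ℝ (Fin n), ∃ y : EuclideanSpace ℝ (Fin m),
        supportFn Q y ≠ ⊤ ∧ z = F' xbar h - y})
    (hStrict : {z | ∃ h : EuclideanSpace ℝ (Fin n), ∃ v ∈ normalCone Q lambar,
        z = F' xbar h - v} = Set.univ) :
    ∀ h : EuclideanSpace ℝ (Fin n),
      (h ∈ (affineSpan ℝ (F' xbar ⁻¹' normalCone Q lambar) : Set (EuclideanSpace ℝ (Fin n))) →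
        strictD2phi Q F F' xbar (ContinuousLinearMap.adjoint (F' xbar) lambar) h =
          ((⟪lambar, F'' xbar h h⟫_ℝ : ℝ) : EReal)) ∧
      (h ∉ (affineSpan ℝ (F' xbar ⁻¹' normalCone Q lambar) : Set (EuclideanSpace ℝ (Fin n))) →
        strictD2phi Q F F' xbar (ContinuousLinearMap.adjoint (F' xbar) lambar) h = ⊤) := by
  intro h
  set A := F' xbar with hA
  set vb := ContinuousLinearMap.adjoint A lambar with hvb
  have hlow := aux_lower Q lambar U hU xbar hxbar F F' F'' hF' hF'' hF''cont hStrict h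
  have hF'c : ContinuousAt F' xbar := (hF'' xbar hxbar).continuousAt
  have hFs : HasStrictFDerivAt F A xbar :=
    hasStrictFDerivAt_of_hasFDerivAt_of_continuousAt
      ((hU.eventually_mem hxbar).mono hF') hF'c
  have hT := fun {ι : Type} (l : Filter ι) => aux_taylor_comp l U hU xbar hxbar F F' F'' hF' hF''
    hF''cont h
  constructor
  · intro hh
    rw [aux_aff_iff Q lambar A hStrict] at hh
    apply le_antisymm
    · obtain ⟨h0, h0s, r, hr, hN⟩ := aux_ri Q lambar A hStrict
      have hc : Tendsto (fun ε : ℝ => ‖ε • A h‖) (𝓝[>] 0) (𝓝 0) := by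
        have : Continuous (fun ε : ℝ => ‖ε • A h‖) := by fun_prop
        have := this.tendsto 0
        simp only [zero_smul, norm_zero] at this
        exact this.mono_left nhdsWithin_le_nhds
      obtain ⟨ε, hε, hε0⟩ :=
        ((hc.eventually (gt_mem_nhds (half_pos hr))).and self_mem_nhdsWithin).exists
      have hε0 : 0 < ε := hε0
      have hNs : ∀ c : ℝ, 0 ≤ c → ∀ a ∈ normalCone Q lambar, c • a ∈ normalCone Q lambar :=
        fun c hc a ha => aux_nc_smul Q lambar hc ha
      have hgen : ∀ k : EuclideanSpace ℝ (Fin n), A k ∈ Submodule.span ℝ (normalCone Q lambar) →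
          ‖ε • A k - A h0‖ < r / 2 →
          ∃ x : ℝ → EuclideanSpace ℝ (Fin n),
            (∀ᶠ t in 𝓝[>] (0:ℝ), F (x t) ∈ normalCone Q lambar) ∧
            Tendsto (fun t => t⁻¹ • (x t - xbar)) (𝓝[>] (0:ℝ)) (𝓝 k) := by
        intro k hk hkr
        refine aux_curve (normalCone Q lambar) hNs A F xbar hF0 hFs hStrict k hk
          (r / 2 / ε) (by positivity) ?_
        intro w hw hwr
        have h1 : ε • w ∈ normalCone Q lambar := by
          apply hN _ (Submodule.smul_mem _ _ hw)
          have e : ε • w - A h0 = ε • (w - A k) + (ε • A k - A h0) := by rw [smul_sub]; abel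
          rw [e]
          have h2 : ‖ε • (w - A k)‖ < r / 2 := by
            rw [norm_smul, Real.norm_of_nonneg hε0.le]
            rw [lt_div_iff₀ hε0] at hwr
            linarith
          linarith [norm_add_le (ε • (w - A k)) (ε • A k - A h0)]
        have h2 := hNs ε⁻¹ (by positivity) _ h1
        rwa [smul_smul, inv_mul_cancel₀ hε0.ne', one_smul] at h2
      obtain ⟨X, hX, hXl⟩ := hgen (ε⁻¹ • h0)
        (by rw [map_smul]; exact Submodule.smul_mem _ _ h0s)
        (by rw [map_smul, smul_smul, mul_inv_cancel₀ hε0.ne', one_smul, sub_self, norm_zero]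
            positivity)
      obtain ⟨Y, hY, hYl⟩ := hgen (h + ε⁻¹ • h0)
        (by rw [map_add, map_smul]; exact Submodule.add_mem _ hh (Submodule.smul_mem _ _ h0s))
        (by rw [map_add, map_smul, smul_add, smul_smul, mul_inv_cancel₀ hε0.ne', one_smul,
              add_sub_cancel_right]
            exact hε)
      have hpos : ∀ᶠ t in 𝓝[>] (0:ℝ), 0 < t := self_mem_nhdsWithin
      have hid : Tendsto (fun t : ℝ => t) (𝓝[>] 0) (𝓝 0) := nhdsWithin_le_nhds
      have hXx : Tendsto X (𝓝[>] 0) (𝓝 xbar) := by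
        have h1 := (hid.smul hXl).const_add xbar
        rw [zero_smul, add_zero] at h1
        refine h1.congr' ?_
        filter_upwards [hpos] with t ht
        rw [smul_smul, mul_inv_cancel₀ ht.ne', one_smul]; abel
      let H : ℝ → EuclideanSpace ℝ (Fin n) := fun t => t⁻¹ • (Y t - X t)
      have hH : Tendsto H (𝓝[>] 0) (𝓝 h) := by
        have h1 := hYl.sub hXl
        rw [add_sub_cancel_right] at h1
        refine h1.congr fun t => ?_
        simp only [H]
        rw [← smul_sub]; congr 1; abel
      let p : ℝ → ℝ × EuclideanSpace ℝ (Fin n) × EuclideanSpace ℝ (Fin n) ×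
          EuclideanSpace ℝ (Fin n) :=
        fun t => (t, H t, X t, ContinuousLinearMap.adjoint (F' (X t)) lambar)
      have hV : Tendsto (fun t => ContinuousLinearMap.adjoint (F' (X t)) lambar) (𝓝[>] 0)
          (𝓝 vb) := by
        have h1 : Tendsto (fun t => F' (X t)) (𝓝[>] 0) (𝓝 A) := hF'c.tendsto.comp hXx
        exact aux_adj_tendsto _ _ _ _ h1
      have hp : Tendsto p (𝓝[>] 0) ((𝓝[>] (0 : ℝ)) ×ˢ (𝓝 h ×ˢ (𝓝 xbar ×ˢ 𝓝 vb))) :=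
        tendsto_id.prodMk (hH.prodMk (hXx.prodMk hV))
      have hp2 : Tendsto p (𝓝[>] 0) (((𝓝[>] (0 : ℝ)) ×ˢ (𝓝 h ×ˢ (𝓝 xbar ×ˢ 𝓝 vb))) ⊓
          Filter.principal
        {p : ℝ × EuclideanSpace ℝ (Fin n) × EuclideanSpace ℝ (Fin n) × EuclideanSpace ℝ (Fin n) |
          ∃ lam ∈ Q, p.2.2.2 = ContinuousLinearMap.adjoint (F' p.2.2.1) lam ∧
            supportFn Q (F p.2.2.1) = ((⟪lam, F p.2.2.1⟫_ℝ : ℝ) : EReal)}) := by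
        refine tendsto_inf.2 ⟨hp, tendsto_principal.2 ?_⟩
        filter_upwards [hX] with t ht
        exact ⟨lambar, hlambar, rfl, aux_supp_eq Q hlambar ht⟩
      have hD : Tendsto (fun t => ⟪lambar, (2 / t ^ 2) • (F (X t + t • H t) - F (X t) -
          t • F' (X t) (H t))⟫_ℝ) (𝓝[>] 0) (𝓝 ⟪lambar, F'' xbar h h⟫_ℝ) := by
        have h1 := hT (𝓝[>] (0:ℝ)) (fun t => t) H X tendsto_id hH hXx
        exact tendsto_const_nhds.inner h1
      have hlim : Tendsto (fun t => secondDQ (fun x => supportFn Q (F x)) (p t).2.2.1 (p t).2.2.2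
          (p t).1 (p t).2.1) (𝓝[>] 0) (𝓝 ((⟪lambar, F'' xbar h h⟫_ℝ : ℝ) : EReal)) := by
        refine ((continuous_coe_real_ereal.tendsto _).comp hD).congr' ?_
        filter_upwards [hX, hY, hpos] with t h1 h2 h3
        have e : X t + t • H t = Y t := by
          simp only [H]; rw [smul_smul, mul_inv_cancel₀ h3.ne', one_smul]; abel
        simp only [Function.comp, p]
        rw [← aux_D]
        unfold secondDQ
        beta_reduce
        rw [e, aux_supp_eq Q hlambar h1, aux_supp_eq Q hlambar h2, EReal.coe_mul, EReal.coe_sub,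
          EReal.coe_sub]
      unfold strictD2phi
      calc _ ≤ liminf (fun p : ℝ × EuclideanSpace ℝ (Fin n) × EuclideanSpace ℝ (Fin n) ×
              EuclideanSpace ℝ (Fin n) =>
              secondDQ (fun x => supportFn Q (F x)) p.2.2.1 p.2.2.2 p.1 p.2.1)
              (map p (𝓝[>] 0)) := liminf_le_liminf_of_le hp2
        _ = _ := hlim.liminf_eq
    · unfold strictD2phi
      refine le_of_forall_lt_imp_le_of_dense fun c hc => ?_
      refine le_liminf_of_le (by isBoundedDefault) ?_
      rw [eventually_inf_principal]
      induction c with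
      | bot => exact Eventually.of_forall fun _ _ => bot_le
      | top => exact absurd hc not_top_lt
      | coe c =>
        rw [EReal.coe_lt_coe_iff] at hc
        filter_upwards [hlow c hc] with p hp hpP
        obtain ⟨lam, hl, hv, hs⟩ := hpP
        refine le_trans ?_ (aux_dq_ge Q F hl _ _ _ _ _ hs)
        rw [hv, aux_D]
        exact EReal.coe_le_coe_iff.2 (hp lam hl hv).le
  · intro hh
    rw [aux_aff_iff Q lambar A hStrict] at hh
    obtain ⟨v, hv, hvw⟩ := aux_lin_exists Q hQconv hlambar (A h) hh
    obtain ⟨δ, hδ, M, hM, V, hV, S, hS1, hS2, hS3⟩ := husotp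
    obtain ⟨c0, hc0, hev⟩ := aux_unit Q lambar S (fun s h1 h2 => (hS2 s h1 h2).1) v (A h) hv hvw
    have hlc := aux_lam_conv Q lambar F' xbar hF'c hStrict
      {l | l ∈ V ∧ (l ∈ Q → ∃ u ∈ S l, ‖u‖ = 1 ∧ c0 < ⟪u, A h⟫_ℝ)} (Filter.Eventually.and hV hev)
    rw [EReal.eq_top_iff_forall_lt]
    intro y
    refine lt_of_lt_of_le (EReal.coe_lt_coe_iff.2 (lt_add_one y)) ?_
    unfold strictD2phi
    refine le_liminf_of_le (by isBoundedDefault) ?_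
    rw [eventually_inf_principal]
    set T := ⟪lambar, F'' xbar h h⟫_ℝ with hTdef
    obtain ⟨C, hC0, hCy⟩ : ∃ C : ℝ, 0 < C ∧ y + 1 ≤ (T - 1) + (C * c0 - 2) := by
      refine ⟨(|y + 4 - T| + 1) / c0, by positivity, ?_⟩
      rw [div_mul_cancel₀ _ hc0.ne']
      linarith [le_abs_self (y + 4 - T)]
    set B : Filter (ℝ × EuclideanSpace ℝ (Fin n) × EuclideanSpace ℝ (Fin n) ×
      EuclideanSpace ℝ (Fin n)) := (𝓝[>] (0 : ℝ)) ×ˢ (𝓝 h ×ˢ (𝓝 xbar ×ˢ 𝓝 vb)) with hB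
    have b1 : Tendsto (fun p : ℝ × EuclideanSpace ℝ (Fin n) × EuclideanSpace ℝ (Fin n) ×
      EuclideanSpace ℝ (Fin n) => p.1) B (𝓝[>] 0) := tendsto_fst
    have b1' := b1.mono_right nhdsWithin_le_nhds
    have b2 : Tendsto (fun p : ℝ × EuclideanSpace ℝ (Fin n) × EuclideanSpace ℝ (Fin n) ×
      EuclideanSpace ℝ (Fin n) => p.2.1) B (𝓝 h) := tendsto_fst.comp tendsto_snd
    have b34 : Tendsto (fun p : ℝ × EuclideanSpace ℝ (Fin n) × EuclideanSpace ℝ (Fin n) ×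
      EuclideanSpace ℝ (Fin n) => p.2.2) B (𝓝 xbar ×ˢ 𝓝 vb) := tendsto_snd.comp tendsto_snd
    have b3 : Tendsto (fun p : ℝ × EuclideanSpace ℝ (Fin n) × EuclideanSpace ℝ (Fin n) ×
      EuclideanSpace ℝ (Fin n) => p.2.2.1) B (𝓝 xbar) := tendsto_fst.comp b34
    have hT' : Tendsto (fun p : ℝ × EuclideanSpace ℝ (Fin n) × EuclideanSpace ℝ (Fin n) ×
      EuclideanSpace ℝ (Fin n) => (2 / p.1 ^ 2) • (F (p.2.2.1 + p.1 • p.2.1) - F p.2.2.1 -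
          p.1 • F' p.2.2.1 p.2.1)) B (𝓝 (F'' xbar h h)) :=
      hT B (fun p => p.1) (fun p => p.2.1) (fun p => p.2.2.1) b1 b2 b3
    have l1 : Tendsto (fun p : ℝ × EuclideanSpace ℝ (Fin n) × EuclideanSpace ℝ (Fin n) ×
      EuclideanSpace ℝ (Fin n) => C * p.1) B (𝓝 0) := by
      simpa using b1'.const_mul C
    have l2 : Tendsto (fun p : ℝ × EuclideanSpace ℝ (Fin n) × EuclideanSpace ℝ (Fin n) ×
      EuclideanSpace ℝ (Fin n) => C * p.1 * ‖(2 / p.1 ^ 2) • (F (p.2.2.1 + p.1 • p.2.1) -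
        F p.2.2.1 - p.1 • F' p.2.2.1 p.2.1)‖) B (𝓝 0) := by
      simpa using l1.mul hT'.norm
    have l3 : Tendsto (fun p : ℝ × EuclideanSpace ℝ (Fin n) × EuclideanSpace ℝ (Fin n) ×
      EuclideanSpace ℝ (Fin n) => C ^ 2 * M * ‖F (p.2.2.1 + p.1 • p.2.1)‖) B (𝓝 0) := by
      have h1 : Tendsto (fun p : ℝ × EuclideanSpace ℝ (Fin n) × EuclideanSpace ℝ (Fin n) ×
        EuclideanSpace ℝ (Fin n) => p.2.2.1 + p.1 • p.2.1) B (𝓝 xbar) := by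
        simpa using b3.add (b1'.smul b2)
      have h2 := (hFs.continuousAt.tendsto.comp h1).norm.const_mul (C ^ 2 * M)
      simpa [hF0] using h2
    have l4 : Tendsto (fun p : ℝ × EuclideanSpace ℝ (Fin n) × EuclideanSpace ℝ (Fin n) ×
      EuclideanSpace ℝ (Fin n) => ‖F' p.2.2.1 p.2.1 - A h‖) B (𝓝 0) := by
      have h1 : Tendsto (fun p : ℝ × EuclideanSpace ℝ (Fin n) × EuclideanSpace ℝ (Fin n) ×
        EuclideanSpace ℝ (Fin n) => F' p.2.2.1) B (𝓝 A) := hF'c.tendsto.comp b3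
      exact aux_clm_tendsto _ _ _ _ _ h1 b2
    filter_upwards [hlow (T - 1) (by linarith), b34.eventually hlc,
      b1.eventually self_mem_nhdsWithin, l1.eventually (ge_mem_nhds hδ),
      l2.eventually (gt_mem_nhds one_pos), l3.eventually (gt_mem_nhds one_pos),
      l4.eventually (gt_mem_nhds (half_pos hc0))] with p g1 g2 g3 g4 g5 g6 g7 hpP
    obtain ⟨lam, hl, hv, hs⟩ := hpP
    have ht : 0 < p.1 := g3
    obtain ⟨hlV, hlS⟩ := g2 lam hl hv
    obtain ⟨u, huS, hu1, huc⟩ := hlS hl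
    obtain ⟨r, hr⟩ := hS3 lam ⟨hl, hlV⟩ u huS hu1
    obtain ⟨hr1, hr2⟩ := hr (C * p.1) ⟨by positivity, g4⟩
    have hlin := hS1 lam ⟨hl, hlV⟩ huS
    have hu0 : 0 ≤ ⟪u, F p.2.2.1⟫_ℝ := by
      have := aux_tangent_normal Q (aux_supp_nc Q hs) (Set.mem_neg.1 hlin.2)
      rw [inner_neg_right, real_inner_comm] at this
      linarith
    have halg := aux_top_alg u (r (C * p.1)) (F p.2.2.1) (F (p.2.2.1 + p.1 • p.2.1))
      ((2 / p.1 ^ 2) • (F (p.2.2.1 + p.1 • p.2.1) - F p.2.2.1 - p.1 • F' p.2.2.1 p.2.1))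
      (F' p.2.2.1 p.2.1) (A h) p.1 C c0 M ht hC0 hu1 hr1 (by
        rw [smul_smul, show p.1 ^ 2 / 2 * (2 / p.1 ^ 2) = 1 by field_simp, one_smul]
        abel) hu0 huc g7 g5 g6
    refine le_trans ?_ (aux_dq_ge Q F hr2 _ _ _ _ _ hs)
    refine EReal.coe_le_coe_iff.2 ?_
    have g1' := g1 lam hl hv
    rw [← aux_D, ← hv] at g1'
    rw [add_assoc, inner_add_left]
    nlinarith

end
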